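/- Furstenberg's theorem: let p₁ and p₂ be two distinct primes and let F be a closed subset of the circle 𝕋 = ℝ/ℤ that is invariant under the maps x ↦ p₁·x and x ↦ p₂·x (i.e., p₁·F ⊆ F and p₂·F ⊆ F). Then either F is a finite set consisting of rational points (images of rational numbers in ℝ/ℤ), or F = 𝕋. -/

import Mathlib

/-!
Multiplicative independence of `a` and `b` makes `log a / log b` irrational, so the ratios of
consecutive elements of the semigroup `{a ^ m * b ^ n}` tend to `1`. Hence a closed invariant set
accumulating at `0`, or at any common fixed point of the two maps, is the whole circle.

Let `A` be an infinite closed invariant set. If its derived set contains a torsion point, then one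
of least order has order coprime to `a` and `b`, so it is fixed by suitable powers of both maps and
`A` is the circle. Otherwise every nonempty closed invariant subset `D` of the derived set `E` is
infinite, so that `D - D` accumulates at `0` and is the circle. If the torsion point `c` is fixed by
both maps, this makes `D ∩ (D - c)` another such subset; iterating, `E` contains arbitrarily long
arithmetic progressions of step `c`. Letting `c` tend to `0` gives `0 ∈ E`, a torsion point after
all.
-/

open Filter Set
open scoped Pointwise Topology

section RealApproximation

theorem exists_nat_mul_add_nat_mul_mem_Ico {K : Type*} [Field K] [LinearOrder K]
    [IsStrictOrderedRing K] [FloorSemiring K] {α η r : K} (hα : 0 < α) (hη : 0 < η) (hr : 0 ≤ r) :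
    ∃ i j : ℕ, j ≤ ⌈α / η⌉₊ ∧ i * α + j * η ∈ Ico r (r + η) := by
  set i : ℕ := ⌊r / α⌋₊
  set s : K := r - i * α
  have hs0 : 0 ≤ s := sub_nonneg.2 ((le_div_iff₀ hα).1 (Nat.floor_le (by positivity)))
  have hsα : s < α := by
    have := (div_lt_iff₀ hα).1 (Nat.lt_floor_add_one (r / α))
    linarith
  have hlo : s ≤ ⌈s / η⌉₊ * η := (div_le_iff₀ hη).1 (Nat.le_ceil _)
  have hhi : ⌈s / η⌉₊ * η < s + η := by
    rw [← lt_div_iff₀ hη, add_div, div_self hη.ne']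
    exact Nat.ceil_lt_add_one (by positivity)
  exact ⟨i, ⌈s / η⌉₊, by gcongr, by linarith, by linarith⟩

theorem eventually_exists_nat_mul_add_nat_mul_mem_Ico {α β δ : ℝ} (hα : 0 < α)
    (h : Irrational (α / β)) (hδ : 0 < δ) :
    ∀ᶠ τ in atTop, ∃ m n : ℕ, m * α + n * β ∈ Ico τ (τ + δ) := by
  obtain ⟨_, hη, hη0, hηδ⟩ := (dense_addSubgroupClosure_pair_iff.2 h).exists_between hδ
  obtain ⟨k, l, rfl⟩ := AddSubgroup.mem_closure_pair.1 hη
  simp only [zsmul_eq_mul] at hη0 hηδ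
  set η : ℝ := k * α + l * β
  set M : ℕ := ⌈α / η⌉₊ * (k.natAbs + l.natAbs)
  -- Adding `M * (α + β)` makes the coefficients of all multiples of `η` in use nonnegative.
  have exists_coeff {j : ℕ} (hj : j ≤ ⌈α / η⌉₊) {c : ℤ} (hc : c.natAbs ≤ k.natAbs + l.natAbs) :
      ∃ m : ℕ, (m : ℝ) = M + j * c := by
    have hjc : j * |c| ≤ M := by
      rw [Int.abs_eq_natAbs]
      exact_mod_cast Nat.mul_le_mul hj hc
    obtain ⟨m, hm⟩ := Int.eq_ofNat_of_zero_le (show 0 ≤ M + j * c by nlinarith [neg_abs_le c])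
    exact ⟨m, by exact_mod_cast hm.symm⟩
  filter_upwards [eventually_ge_atTop (M * (α + β))] with τ hτ
  obtain ⟨i, j, hj, hlo, hhi⟩ := exists_nat_mul_add_nat_mul_mem_Ico hα hη0 (sub_nonneg.2 hτ)
  obtain ⟨m, hm⟩ := exists_coeff hj (Nat.le_add_right k.natAbs l.natAbs)
  obtain ⟨n, hn⟩ := exists_coeff hj (Nat.le_add_left l.natAbs k.natAbs)
  have hsum : (m + i : ℕ) * α + n * β = M * (α + β) + (i * α + j * η) := by
    rw [Nat.cast_add, hm, hn]
    ring
  exact ⟨m + i, n, by rw [hsum]; constructor <;> linarith⟩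

end RealApproximation

/-- Multiplicative independence of two natural numbers: both exceed `1`, and no positive power of
`a` is a power of `b` (the exponent of `b` then vanishes as well). -/
structure MultiplicativelyIndependent (a b : ℕ) : Prop where
  one_lt_left : 1 < a
  one_lt_right : 1 < b
  eq_zero_of_pow_eq_pow : ∀ {m n : ℕ}, a ^ m = b ^ n → m = 0

namespace MultiplicativelyIndependent

variable {a b : ℕ}

theorem of_prime {p q : ℕ} (hp : p.Prime) (hq : q.Prime) (hpq : p ≠ q) :
    MultiplicativelyIndependent p q where
  one_lt_left := hp.one_lt
  one_lt_right := hq.one_lt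
  eq_zero_of_pow_eq_pow {m n} h := by
    by_contra hm
    exact hpq <| (Nat.prime_dvd_prime_iff_eq hp hq).1 <|
      hp.dvd_of_dvd_pow (h ▸ dvd_pow_self p hm)

theorem pow (h : MultiplicativelyIndependent a b) {u : ℕ} (hu : u ≠ 0) :
    MultiplicativelyIndependent (a ^ u) (b ^ u) where
  one_lt_left := Nat.one_lt_pow hu h.one_lt_left
  one_lt_right := Nat.one_lt_pow hu h.one_lt_right
  eq_zero_of_pow_eq_pow {m n} hmn := by
    rw [← pow_mul, ← pow_mul] at hmn
    exact (mul_eq_zero_iff_left hu).1 (h.eq_zero_of_pow_eq_pow hmn)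

theorem irrational_log_div_log (h : MultiplicativelyIndependent a b) :
    Irrational (Real.log a / Real.log b) := by
  have ha : 0 < Real.log a := Real.log_pos (by exact_mod_cast h.one_lt_left)
  have hb : 0 < Real.log b := Real.log_pos (by exact_mod_cast h.one_lt_right)
  rintro ⟨r, hr⟩
  have hr0 : 0 ≤ r := by
    have : (0 : ℝ) ≤ r := hr ▸ by positivity
    exact_mod_cast this
  lift r to ℚ≥0 using hr0
  have hlog : r.den * Real.log a = r.num * Real.log b := by
    have hnum : (r : ℝ) * r.den = r.num := by exact_mod_cast r.mul_den_eq_num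
    rw [← hnum, show (r : ℝ) = _ from hr]
    field_simp
  have hpow : (a : ℝ) ^ r.den = b ^ r.num := by
    have ha0 : (0 : ℝ) < a := by exact_mod_cast h.one_lt_left.pos
    have hb0 : (0 : ℝ) < b := by exact_mod_cast h.one_lt_right.pos
    rw [← Real.log_pow, ← Real.log_pow] at hlog
    exact Real.log_injOn_pos (pow_pos ha0 _) (pow_pos hb0 _) hlog
  exact r.den_ne_zero (h.eq_zero_of_pow_eq_pow (by exact_mod_cast hpow))

theorem eventually_exists_pow_mul_pow_mem_Ico (h : MultiplicativelyIndependent a b) {δ : ℝ}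
    (hδ : 0 < δ) :
    ∀ᶠ t : ℝ in atTop, ∃ m n : ℕ, ((a ^ m * b ^ n : ℕ) : ℝ) ∈ Ico t (t * (1 + δ)) := by
  have ha : (1 : ℝ) < a := by exact_mod_cast h.one_lt_left
  have hb : (0 : ℝ) < b := by exact_mod_cast h.one_lt_right.pos
  filter_upwards [eventually_gt_atTop 0, Real.tendsto_log_atTop.eventually <|
    eventually_exists_nat_mul_add_nat_mul_mem_Ico (Real.log_pos ha) h.irrational_log_div_log
      (Real.log_pos (show 1 < 1 + δ by linarith))] with t ht ⟨m, n, hlo, hhi⟩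
  have hlog : m * Real.log a + n * Real.log b = Real.log (a ^ m * b ^ n) := by
    rw [Real.log_mul (by positivity) (by positivity), Real.log_pow, Real.log_pow]
  rw [hlog] at hlo hhi
  rw [← Real.log_mul ht.ne' (by positivity)] at hhi
  push_cast
  exact ⟨m, n, (Real.log_le_log_iff ht (by positivity)).1 hlo,
    (Real.log_lt_log_iff (by positivity) (by positivity)).1 hhi⟩

end MultiplicativelyIndependent

section Invariance

theorem mapsTo_pow_smul {M X : Type*} [Monoid M] [MulAction M X] {A : Set X} {a : M}
    (ha : MapsTo (a • ·) A A) (m : ℕ) : MapsTo (a ^ m • ·) A A :=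
  smul_iterate (α := X) a m ▸ ha.iterate m

theorem mapsTo_nsmul_sub {G : Type*} [SubtractionCommMonoid G] {A : Set G} {n : ℕ}
    (h : MapsTo (n • ·) A A) : MapsTo (n • ·) (A - A) (A - A) := by
  rintro _ ⟨x, hx, y, hy, rfl⟩
  exact ⟨n • x, h hx, n • y, h hy, (nsmul_sub x y n).symm⟩

theorem mapsTo_nsmul_preimage_add_right {G : Type*} [AddCommMonoid G] {A : Set G} {n : ℕ} {c : G}
    (h : MapsTo (n • ·) A A) (hc : n • c = c) :
    MapsTo (n • ·) ((· + c) ⁻¹' A) ((· + c) ⁻¹' A) := by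
  intro x hx
  rw [mem_preimage] at hx ⊢
  simpa [nsmul_add, hc] using h hx

theorem isOfFinAddOrder_of_finite_of_mapsTo {G : Type*} [AddCancelCommMonoid G]
    {A : Set G} (hA : A.Finite) {a : ℕ} (ha : 1 < a) (h : MapsTo (a • ·) A A) {x : G} (hx : x ∈ A) :
    IsOfFinAddOrder x := by
  by_contra hord
  have hinj : Function.Injective fun m : ℕ => a ^ m • x :=
    (injective_nsmul_iff_not_isOfFinAddOrder.2 hord).comp (Nat.pow_right_injective ha)
  exact infinite_of_injective_forall_mem hinj (fun m => mapsTo_pow_smul h m hx) hA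

theorem pow_totient_nsmul_eq_self {G : Type*} [AddLeftCancelMonoid G] {a : ℕ} {x : G}
    (h : (addOrderOf x).Coprime a) : a ^ (addOrderOf x).totient • x = x := by
  simpa using nsmul_eq_nsmul_iff_modEq.2 (Nat.ModEq.pow_totient h.symm)

theorem exists_isOfFinAddOrder_forall_coprime_addOrderOf {G : Type*} [AddMonoid G] {A : Set G}
    (hA : ∃ x ∈ A, IsOfFinAddOrder x) :
    ∃ x ∈ A, IsOfFinAddOrder x ∧ ∀ a : ℕ, MapsTo (a • ·) A A → (addOrderOf x).Coprime a := by
  obtain ⟨x, ⟨hxA, hx⟩, hmin⟩ := exists_minimalFor_of_wellFoundedLT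
    (fun x => x ∈ A ∧ IsOfFinAddOrder x) addOrderOf hA
  refine ⟨x, hxA, hx, fun a ha => ?_⟩
  by_contra hcop
  have hlt : addOrderOf (a • x) < addOrderOf x := by
    rw [hx.addOrderOf_nsmul]
    exact Nat.div_lt_self hx.addOrderOf_pos
      (lt_of_le_of_ne (Nat.gcd_pos_of_pos_left _ hx.addOrderOf_pos) (Ne.symm hcop))
  exact hlt.not_ge (hmin ⟨ha hxA, hx.nsmul⟩ hlt.le)

end Invariance

section AccumulationPoints

theorem mapsTo_derivedSet_of_finite_preimage_singleton {X Y : Type*} [TopologicalSpace X]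
    [T1Space X] [TopologicalSpace Y] {f : X → Y} (hf : Continuous f)
    (hfin : ∀ y, (f ⁻¹' {y}).Finite) {A : Set X} {B : Set Y} (h : MapsTo f A B) :
    MapsTo f (derivedSet A) (derivedSet B) := by
  intro x hx
  rw [mem_derivedSet, accPt_iff_frequently_nhdsNE] at hx ⊢
  have htendsto : Tendsto f (𝓝[≠] x) (𝓝[≠] f x) :=
    tendsto_nhdsWithin_iff.2 ⟨hf.continuousAt.mono_left nhdsWithin_le_nhds,
      nhdsNE_le_cofinite x (hfin (f x)).compl_mem_cofinite⟩
  exact htendsto.frequently (hx.mono fun z hz => h hz)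

theorem accPt_zero_preimage_add_right {G : Type*} [AddGroup G] [TopologicalSpace G]
    [ContinuousAdd G] {A : Set G} {x : G} (hx : AccPt x (𝓟 A)) :
    AccPt 0 (𝓟 ((· + x) ⁻¹' A)) := by
  have h := hx.map (continuous_add_const (-x)).continuousAt (add_left_injective (-x))
  rw [map_principal, add_neg_cancel] at h
  refine h.mono (principal_mono.2 ?_)
  rintro _ ⟨y, hy, rfl⟩
  simpa using hy

end AccumulationPoints

section Progressions

variable {G : Type*} {E : Set G} {c : G}

/-- The first terms `x` of the arithmetic progressions `x, x + c, …, x + k • c` contained in `E`.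
The index `k` counts steps, so such a progression has `k + 1` terms. -/
def progressionStarts [AddMonoid G] (E : Set G) (c : G) (k : ℕ) : Set G :=
  {x | ∀ j ≤ k, x + j • c ∈ E}

theorem progressionStarts_zero [AddMonoid G] : progressionStarts E c 0 = E := by
  simp [progressionStarts]

theorem progressionStarts_subset [AddMonoid G] (k : ℕ) : progressionStarts E c k ⊆ E :=
  fun x hx => by simpa using hx 0 k.zero_le

theorem mem_progressionStarts_succ [AddMonoid G] {k : ℕ} {x : G}
    (hx : x ∈ progressionStarts E c k) (hxc : x + c ∈ progressionStarts E c k) :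
    x ∈ progressionStarts E c (k + 1) := by
  rintro (_ | j) hj
  · exact hx 0 k.zero_le
  · simpa [succ_nsmul', add_assoc] using hxc j (Nat.le_of_succ_le_succ hj)

theorem mapsTo_nsmul_progressionStarts [AddCommMonoid G] {n : ℕ} (h : MapsTo (n • ·) E E)
    (hc : n • c = c) (k : ℕ) :
    MapsTo (n • ·) (progressionStarts E c k) (progressionStarts E c k) :=
  fun _ hx j hj => mapsTo_nsmul_preimage_add_right h
    (by rw [← mul_nsmul, mul_nsmul', hc]) (hx j hj)

theorem isClosed_progressionStarts [AddMonoid G] [TopologicalSpace G] [ContinuousAdd G]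
    (hE : IsClosed E) (k : ℕ) : IsClosed (progressionStarts E c k) := by
  simp only [progressionStarts, ofPred_forall]
  exact isClosed_biInter fun j _ => hE.preimage (continuous_add_const (j • c))

end Progressions

section AddCircle

variable {T : ℝ}

theorem finite_preimage_nsmul_singleton {n : ℕ} (hn : 0 < n) (y : AddCircle T) :
    ((n • ·) ⁻¹' {y}).Finite := by
  rcases ((n • ·) ⁻¹' {y}).eq_empty_or_nonempty with hempty | ⟨x, hx⟩
  · exact hempty ▸ finite_empty
  · refine ((AddCircle.finite_torsion T hn).preimage (sub_left_injective (b := x)).injOn).subset ?_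
    intro z hz
    change n • (z - x) = 0
    rw [nsmul_sub, sub_eq_zero]
    exact hz.trans hx.symm

theorem mapsTo_nsmul_derivedSet {A : Set (AddCircle T)} {n : ℕ} (hn : 0 < n)
    (h : MapsTo (n • ·) A A) : MapsTo (n • ·) (derivedSet A) (derivedSet A) :=
  mapsTo_derivedSet_of_finite_preimage_singleton (continuous_const_smul n)
    (finite_preimage_nsmul_singleton hn) h

variable [hT : Fact (0 < T)]

theorem eq_coe_norm_or_eq_neg_coe_norm (x : AddCircle T) :
    x = (‖x‖ : ℝ) ∨ x = -(‖x‖ : ℝ) := by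
  obtain ⟨r, ⟨hlo, hhi⟩, rfl⟩ := (AddCircle.coe_image_Ioc_eq T (-(T / 2))).ge (mem_univ x)
  have hnorm : ‖(r : AddCircle T)‖ = |r| := by
    rw [AddCircle.norm_coe_eq_abs_iff T hT.out.ne', abs_of_pos hT.out]
    exact abs_le.2 ⟨hlo.le, by linarith⟩
  rw [hnorm]
  rcases abs_choice r with h | h <;> simp [h]

theorem exists_rat_mul_period_eq {x : AddCircle T} (hx : IsOfFinAddOrder x) :
    ∃ r : ℚ, ((r * T : ℝ) : AddCircle T) = x := by
  obtain ⟨y, rfl⟩ := QuotientAddGroup.mk_surjective x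
  obtain ⟨r, hr⟩ := AddCircle.isOfFinAddOrder_iff_exists_rat_eq_div.1 hx
  exact ⟨r, congrArg _ ((eq_div_iff hT.out.ne').1 hr)⟩

theorem exists_norm_add_nsmul_period_div_le (x : AddCircle T) {n : ℕ} (hn : 0 < n) :
    ∃ j ≤ n, ‖x + j • ((T / n : ℝ) : AddCircle T)‖ ≤ T / n := by
  have hc : 0 < T / n := div_pos hT.out (by exact_mod_cast hn)
  obtain ⟨r, ⟨hr0, hrT⟩, hr⟩ := AddCircle.eq_coe_Ico (-x)
  set j : ℕ := ⌊r / (T / n)⌋₊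
  have hlo : j * (T / n) ≤ r := (le_div_iff₀ hc).1 (Nat.floor_le (by positivity))
  have hhi : r < (j + 1) * (T / n) := (div_lt_iff₀ hc).1 (Nat.lt_floor_add_one _)
  have hjn : j ≤ n := Nat.floor_le_of_le <| by
    rw [div_le_iff₀ hc, mul_div_cancel₀ T (by positivity)]
    exact hrT.le
  refine ⟨j, hjn, ?_⟩
  calc ‖x + j • ((T / n : ℝ) : AddCircle T)‖
      = ‖((j * (T / n) - r : ℝ) : AddCircle T)‖ := by
        rw [AddCircle.coe_sub, hr, ← nsmul_eq_mul, AddCircle.coe_nsmul, sub_neg_eq_add, add_comm]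
    _ ≤ |j * (T / n) - r| := QuotientAddGroup.norm_mk_le_norm
    _ ≤ T / n := by rw [abs_le]; constructor <;> linarith

namespace MultiplicativelyIndependent

variable {a b : ℕ} {A E : Set (AddCircle T)}

theorem eventually_exists_norm_nsmul_coe_sub_lt (h : MultiplicativelyIndependent a b) {ε : ℝ}
    (hε : 0 < ε) :
    ∀ᶠ r : ℝ in 𝓝[>] 0, ∀ y : AddCircle T,
      ∃ m n : ℕ, ‖(a ^ m * b ^ n) • (r : AddCircle T) - y‖ < ε := by
  have hT0 : 0 < T := hT.out
  obtain ⟨N, hN⟩ := eventually_atTop.1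
    (h.eventually_exists_pow_mul_pow_mem_Ico (δ := ε / (2 * T)) (by positivity))
  filter_upwards [self_mem_nhdsWithin,
    (tendsto_inv_nhdsGT_zero.const_mul_atTop hT0).eventually_ge_atTop N] with r (hr : 0 < r) hNr y
  obtain ⟨z, ⟨hTz, hzT⟩, rfl⟩ := (AddCircle.coe_image_Ico_eq T T).ge (mem_univ y)
  obtain ⟨m, n, hlo, hhi⟩ := hN (z / r) (hNr.trans (by rw [div_eq_mul_inv]; gcongr))
  rw [div_le_iff₀ hr] at hlo
  rw [div_mul_eq_mul_div, lt_div_iff₀ hr] at hhi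
  have hzε : z * (ε / (2 * T)) < ε := by
    rw [mul_div_left_comm]
    exact mul_lt_of_lt_one_right hε ((div_lt_one (by positivity)).2 (by linarith))
  refine ⟨m, n, ?_⟩
  calc ‖(a ^ m * b ^ n) • (r : AddCircle T) - z‖
      = ‖(((a ^ m * b ^ n : ℕ) * r - z : ℝ) : AddCircle T)‖ := by
        rw [AddCircle.coe_sub, ← nsmul_eq_mul, AddCircle.coe_nsmul]
    _ ≤ |(a ^ m * b ^ n : ℕ) * r - z| := QuotientAddGroup.norm_mk_le_norm
    _ < ε := by rw [abs_lt]; constructor <;> linarith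

theorem eventually_exists_norm_nsmul_sub_lt (h : MultiplicativelyIndependent a b) {ε : ℝ}
    (hε : 0 < ε) :
    ∀ᶠ x : AddCircle T in 𝓝[≠] 0, ∀ y, ∃ m n : ℕ, ‖(a ^ m * b ^ n) • x - y‖ < ε := by
  filter_upwards [tendsto_norm_nhdsNE_zero.eventually
    (h.eventually_exists_norm_nsmul_coe_sub_lt (T := T) hε)] with x hx y
  rcases eq_coe_norm_or_eq_neg_coe_norm x with hpos | hneg
  · rw [hpos]
    exact hx y
  · obtain ⟨m, n, hmn⟩ := hx (-y)
    refine ⟨m, n, ?_⟩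
    rwa [hneg, smul_neg, ← neg_add', norm_neg, ← sub_neg_eq_add]

theorem eq_univ_of_accPt_zero (h : MultiplicativelyIndependent a b) (hA : IsClosed A)
    (ha : MapsTo (a • ·) A A) (hb : MapsTo (b • ·) A A) (h0 : AccPt 0 (𝓟 A)) : A = univ := by
  refine eq_univ_of_forall fun y => hA.closure_subset (Metric.mem_closure_iff.2 fun ε hε => ?_)
  obtain ⟨x, hxA, hx⟩ := ((accPt_iff_frequently_nhdsNE.1 h0).and_eventually
    (h.eventually_exists_norm_nsmul_sub_lt hε)).exists
  obtain ⟨m, n, hmn⟩ := hx y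
  refine ⟨(a ^ m * b ^ n) • x, ?_, by rwa [dist_comm, dist_eq_norm]⟩
  rw [mul_smul]
  exact mapsTo_pow_smul ha m (mapsTo_pow_smul hb n hxA)

theorem eq_univ_of_mem_derivedSet_of_nsmul_eq_self (h : MultiplicativelyIndependent a b)
    (hA : IsClosed A) (ha : MapsTo (a • ·) A A) (hb : MapsTo (b • ·) A A) {x : AddCircle T}
    (hx : x ∈ derivedSet A) (hax : a • x = x) (hbx : b • x = x) : A = univ := by
  have huniv : (· + x) ⁻¹' A = univ :=
    h.eq_univ_of_accPt_zero (hA.preimage (continuous_add_const x))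
      (mapsTo_nsmul_preimage_add_right ha hax) (mapsTo_nsmul_preimage_add_right hb hbx)
      (accPt_zero_preimage_add_right hx)
  exact (add_right_surjective x).preimage_injective (huniv.trans preimage_univ.symm)

theorem eq_univ_of_isOfFinAddOrder_mem_derivedSet (h : MultiplicativelyIndependent a b)
    (hA : IsClosed A) (ha : MapsTo (a • ·) A A) (hb : MapsTo (b • ·) A A)
    (htors : ∃ x ∈ derivedSet A, IsOfFinAddOrder x) : A = univ := by
  obtain ⟨x, hx, hxfin, hcop⟩ := exists_isOfFinAddOrder_forall_coprime_addOrderOf htors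
  have hu : (addOrderOf x).totient ≠ 0 := (Nat.totient_pos.2 hxfin.addOrderOf_pos).ne'
  exact (h.pow hu).eq_univ_of_mem_derivedSet_of_nsmul_eq_self hA
    (mapsTo_pow_smul ha _) (mapsTo_pow_smul hb _) hx
    (pow_totient_nsmul_eq_self (hcop a (mapsTo_nsmul_derivedSet h.one_lt_left.pos ha)))
    (pow_totient_nsmul_eq_self (hcop b (mapsTo_nsmul_derivedSet h.one_lt_right.pos hb)))

theorem sub_self_eq_univ_of_infinite (h : MultiplicativelyIndependent a b) (hA : IsClosed A)
    (hinf : A.Infinite) (ha : MapsTo (a • ·) A A) (hb : MapsTo (b • ·) A A) : A - A = univ := by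
  have hclosed : IsClosed (A - A) := by
    rw [← sub_image_prod]
    exact ((hA.isCompact.prod hA.isCompact).image continuous_sub).isClosed
  obtain ⟨x, hx⟩ := hinf.exists_accPt_principal
  have hxA : x ∈ A := (isClosed_iff_derivedSet_subset A).1 hA hx
  have hsub : (· + x) ⁻¹' A ⊆ A - A := fun y hy => ⟨y + x, hy, x, hxA, add_sub_cancel_right y x⟩
  exact h.eq_univ_of_accPt_zero hclosed (mapsTo_nsmul_sub ha) (mapsTo_nsmul_sub hb)
    ((accPt_zero_preimage_add_right hx).mono (principal_mono.2 hsub))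

theorem progressionStarts_nonempty (h : MultiplicativelyIndependent a b) (hE : IsClosed E)
    (hne : E.Nonempty) (ha : MapsTo (a • ·) E E) (hb : MapsTo (b • ·) E E)
    (htors : ∀ x ∈ E, ¬ IsOfFinAddOrder x) {c : AddCircle T} (hac : a • c = c) (hbc : b • c = c)
    (k : ℕ) : (progressionStarts E c k).Nonempty := by
  induction k with
  | zero => rwa [progressionStarts_zero]
  | succ k ih =>
    have hDa := mapsTo_nsmul_progressionStarts ha hac k
    have hDb := mapsTo_nsmul_progressionStarts hb hbc k
    obtain ⟨z, hz⟩ := ih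
    have hinf : (progressionStarts E c k).Infinite := fun hfin =>
      htors z (progressionStarts_subset k hz)
        (isOfFinAddOrder_of_finite_of_mapsTo hfin h.one_lt_left hDa hz)
    have huniv := h.sub_self_eq_univ_of_infinite (isClosed_progressionStarts hE k) hinf hDa hDb
    obtain ⟨y, hy, x, hx, hyx⟩ := huniv.ge (mem_univ c)
    exact ⟨x, mem_progressionStarts_succ hx (eq_sub_iff_add_eq'.1 hyx.symm ▸ hy)⟩

theorem exists_mem_isOfFinAddOrder (h : MultiplicativelyIndependent a b) (hE : IsClosed E)
    (hne : E.Nonempty) (ha : MapsTo (a • ·) E E) (hb : MapsTo (b • ·) E E) :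
    ∃ x ∈ E, IsOfFinAddOrder x := by
  by_contra! htors
  refine htors 0 (hE.closure_subset (Metric.mem_closure_iff.2 fun ε hε => ?_)) .zero
  obtain ⟨N, hN⟩ := exists_nat_gt (T / ε)
  obtain ⟨n, hn, hprime⟩ := Nat.exists_infinite_primes (max (max a b) N + 1)
  have hn0 : (0 : ℝ) < n := by exact_mod_cast hprime.pos
  have hnε : T / n < ε := by
    rw [div_lt_comm₀ hn0 hε]
    exact hN.trans_le (by exact_mod_cast (by omega : N ≤ n))
  set c : AddCircle T := ((T / n : ℝ) : AddCircle T)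
  have hord : addOrderOf c = n := AddCircle.addOrderOf_period_div hprime.pos
  have hu : (addOrderOf c).totient ≠ 0 := by
    rw [hord]
    exact (Nat.totient_pos.2 hprime.pos).ne'
  have hcop {m : ℕ} (hm : 1 < m) (hmn : m < n) : (addOrderOf c).Coprime m := by
    rw [hord]
    exact Nat.coprime_of_lt_prime (by omega) hmn hprime
  obtain ⟨x, hx⟩ := (h.pow hu).progressionStarts_nonempty hE hne
    (mapsTo_pow_smul ha _) (mapsTo_pow_smul hb _) htors
    (pow_totient_nsmul_eq_self (hcop h.one_lt_left (by omega)))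
    (pow_totient_nsmul_eq_self (hcop h.one_lt_right (by omega))) n
  obtain ⟨j, hj, hnorm⟩ := exists_norm_add_nsmul_period_div_le x hprime.pos
  exact ⟨_, hx j hj, by rw [dist_zero_left]; exact hnorm.trans_lt hnε⟩

end MultiplicativelyIndependent

theorem furstenberg_times_p_times_q_general {a b : ℕ} (hab : MultiplicativelyIndependent a b)
    {F : Set (AddCircle T)} (hF : IsClosed F) (ha : MapsTo (a • ·) F F)
    (hb : MapsTo (b • ·) F F) :
    (F.Finite ∧ ∀ x ∈ F, ∃ r : ℚ, ((r * T : ℝ) : AddCircle T) = x) ∨ F = univ := by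
  rcases F.finite_or_infinite with hfin | hinf
  · exact .inl ⟨hfin, fun x hx => exists_rat_mul_period_eq <|
      isOfFinAddOrder_of_finite_of_mapsTo hfin hab.one_lt_left ha hx⟩
  · exact .inr <| hab.eq_univ_of_isOfFinAddOrder_mem_derivedSet hF ha hb <|
      hab.exists_mem_isOfFinAddOrder (isClosed_derivedSet F) hinf.exists_accPt_principal
        (mapsTo_nsmul_derivedSet hab.one_lt_left.pos ha)
        (mapsTo_nsmul_derivedSet hab.one_lt_right.pos hb)

end AddCircle

/-- Furstenberg's theorem: a closed subset of the circle `ℝ/ℤ` invariant under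
multiplication by two distinct primes `p₁, p₂` is either a finite set of rational points
or the whole circle. -/
theorem furstenberg_times_p_times_q (p₁ p₂ : ℕ) (hp₁ : p₁.Prime) (hp₂ : p₂.Prime)
    (hne : p₁ ≠ p₂) (F : Set UnitAddCircle) (hF : IsClosed F)
    (h₁ : (fun x => p₁ • x) '' F ⊆ F) (h₂ : (fun x => p₂ • x) '' F ⊆ F) :
    (F.Finite ∧ ∀ x ∈ F, ∃ r : ℚ, ((r : ℝ) : UnitAddCircle) = x) ∨ F = Set.univ := by
  simpa only [mul_one] using furstenberg_times_p_times_q_general (.of_prime hp₁ hp₂ hne) hF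
    (mapsTo_iff_image_subset.2 h₁) (mapsTo_iff_image_subset.2 h₂)
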